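/- The function φ* has the following mapping properties (boundary values f_±(x) := lim_{ε→0⁺} f(x ± iε)): (i) for x ∈ (1,+∞): Re φ*_±(x) < φ*(1) and Im φ*_±(x) = ±(1−x)π/c; (ii) for x ∈ (b,1]: φ*(x) is real and φ*(x) < 0; (iii) φ*(b) = 0 and φ*_±(a) = ±(1/c − 1)πi; (iv) for x ∈ (a,b): Re φ*_±(x) = 0 and arg φ*_±(x) = ±π/2; (v) for x ∈ [0,a): Re φ*_±(x) < 0 and Im φ*_±(x) = ±(1/c − 1)π; (vi) for x ∈ (−∞,0): Re φ*_±(x) < Re φ*_±(0) and Im φ*_±(x) = ±((1−c)/c − x/c)π. -/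

import Mathlib

open Complex Real Filter Topology Set

/-!
In the open upper half-plane all branches in `ν` can be moved so that only logarithms and square
roots of points of the upper half-plane occur: `ν = nuUp` there (`nu_eq_nuUp`). The principal
logarithm is continuous on the closed upper half-plane minus `0`, so `nuUp` has the boundary value
`nuUp t` at every real `t ∉ {0, 1, a, b}`, and by `(R - c/2)(R + c/2) = z(z - 1)`, where
`R² = (z - a)(z - b)`, its size on a horizontal segment is dominated by a multiple of
`|log|t|| + |log|t-1|| + 1`. Dominated convergence then gives (`boundary_increment`)
`φ*₊(y) - φ*₊(x) = ∫_x^y nuUp t dt` for all real `x, y`, across the branch points as well.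

It remains to read off the boundary integrand. Its real part is
`(1/c) log (|R - c/2| / |R + c/2|)`, so it is negative for `t > b` (`R > 0`), zero on `(a, b)`
(`R` imaginary) and positive for `t < a` (`R < 0`). Its imaginary part is `-π/c` on `(1, ∞)` and
`(-∞, 0)`, zero on `(b, 1)` and `(0, a)`, and `-(2/c) arctan (2√((t-a)(b-t))/c)` on `(a, b)`.
The value of `φ*₊` at `a` comes from the integral of this last function over `[a, b]`, computed in
`integral_arctan` from an explicit primitive.

The lower boundary values reduce to the upper ones: `z ↦ conj (φ* (conj z))` is again an
antiderivative of `nuUp` in the upper half-plane, because `ν (conj z) = conj (ν z)`.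
-/

/-! ### The integrand in the upper half-plane -/

/-- The standing relations between `c` and the branch points `a < b`: they are the two roots of
`X² - X + c²/4`. -/
structure BranchPts (a b c : ℝ) : Prop where
  c_pos : 0 < c
  c_lt : c < 1
  sum : a + b = 1
  prod : a * b = c ^ 2 / 4
  lt : a < b

/-- The square root `((z-a)(z-b))^{1/2}`, as the product of two principal square roots. -/
noncomputable def sqrtAB (a b : ℝ) (z : ℂ) : ℂ :=
  (z - (a:ℂ)) ^ ((1:ℂ)/2) * (z - (b:ℂ)) ^ ((1:ℂ)/2)

/-- The form of `ν` adapted to the closed upper half-plane: there it agrees with `ν` in the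
interior, and all its logarithms have arguments in the closed upper half-plane, on which the
principal logarithm is continuous away from `0`. -/
noncomputable def nuUp (a b c : ℝ) (z : ℂ) : ℂ :=
  (1/(c:ℂ)) * (2 * Complex.log (sqrtAB a b z - (c:ℂ)/2) - Complex.log z - Complex.log (z - 1)
    - π * Complex.I)

namespace BranchPts

variable {a b c : ℝ}

lemma of_eq (hc0 : 0 < c) (hc1 : c < 1) (ha : a = (1 - Real.sqrt (1 - c ^ 2)) / 2)
    (hb : b = (1 + Real.sqrt (1 - c ^ 2)) / 2) : BranchPts a b c := by
  have h0 : 0 < 1 - c ^ 2 := by nlinarith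
  have h1 := Real.sqrt_pos.2 h0
  have h2 := Real.sq_sqrt h0.le
  refine ⟨hc0, hc1, by rw [ha, hb]; ring, ?_, by rw [ha, hb]; linarith⟩
  rw [ha, hb]; nlinarith

lemma a_pos (h : BranchPts a b c) : 0 < a := by
  have := h.c_pos; have := h.sum; have := h.prod; have := h.lt
  by_contra hh
  have hb : 0 < b := by linarith
  have : 0 < c ^ 2 := by positivity
  nlinarith

lemma b_lt (h : BranchPts a b c) : b < 1 := by
  have := h.a_pos; have := h.sum; linarith

lemma b_pos (h : BranchPts a b c) : 0 < b := h.a_pos.trans h.lt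

end BranchPts

variable {a b c : ℝ}

lemma cpow_half_sq (z : ℂ) : (z ^ ((1:ℂ)/2)) ^ 2 = z := by
  simp

lemma sqrtAB_sq (h : BranchPts a b c) (z : ℂ) :
    sqrtAB a b z ^ 2 = z ^ 2 - z + (c:ℂ) ^ 2 / 4 := by
  have h1 : (a:ℂ) + b = 1 := by exact_mod_cast h.sum
  have h2 : (a:ℂ) * b = (c:ℂ)^2/4 := by exact_mod_cast h.prod
  rw [sqrtAB, mul_pow, cpow_half_sq, cpow_half_sq, ← h2]
  linear_combination (-z) * h1

lemma sqrtAB_factor (h : BranchPts a b c) (z : ℂ) :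
    (sqrtAB a b z - (c:ℂ)/2) * (sqrtAB a b z + (c:ℂ)/2) = z * (z - 1) := by
  linear_combination sqrtAB_sq h z

lemma arg_mem_of_im_pos {z : ℂ} (hz : 0 < z.im) : 0 < z.arg ∧ z.arg < π := by
  have h1 : z.arg < π := Complex.arg_lt_pi_iff.2 (Or.inr hz.ne')
  refine ⟨lt_of_le_of_ne (Complex.arg_nonneg_iff.2 hz.le) ?_, h1⟩
  intro h0
  have := (Complex.arg_eq_zero_iff.1 h0.symm).2
  linarith

lemma log_neg_of_im_pos {z : ℂ} (hz : 0 < z.im) :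
    Complex.log (-z) = Complex.log z - π * Complex.I := by
  rw [Complex.log, Complex.log, Complex.arg_neg_eq_arg_sub_pi_of_im_pos hz, norm_neg]
  push_cast; ring

lemma sqrtAB_im_pos {z : ℂ} (hz : 0 < z.im) : 0 < (sqrtAB a b z).im := by
  have ha : 0 < (z - (a:ℂ)).im := by simpa using hz
  have hb : 0 < (z - (b:ℂ)).im := by simpa using hz
  have ha0 : z - (a:ℂ) ≠ 0 := fun h => by rw [h] at ha; simp at ha
  have hb0 : z - (b:ℂ) ≠ 0 := fun h => by rw [h] at hb; simp at hb
  rw [sqrtAB, Complex.cpow_def_of_ne_zero ha0, Complex.cpow_def_of_ne_zero hb0, ← Complex.exp_add,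
    Complex.exp_im]
  have e : (Complex.log (z - a) * (1/2) + Complex.log (z - b) * (1/2)).im
      = ((z - a).arg + (z - b).arg) / 2 := by
    rw [← Complex.log_im, ← Complex.log_im, ← add_mul,
      show ((1:ℂ)/2) = ((1/2 : ℝ) : ℂ) by push_cast; rfl, Complex.im_mul_ofReal]
    simp; ring
  rw [e]
  have h1 := arg_mem_of_im_pos ha
  have h2 := arg_mem_of_im_pos hb
  exact mul_pos (Real.exp_pos _) (Real.sin_pos_of_pos_of_lt_pi (by linarith) (by linarith))

/-- The arguments of `z` and `1 - z` have opposite signs for `z` in the upper half-plane, so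
`log (z - z²)` splits without a branch correction; and `R - c/2` stays in the upper half-plane. -/
lemma nu_eq_nuUp {z : ℂ} (hz : 0 < z.im) :
    (2/(c:ℂ)) * Complex.log ((c:ℂ)/2 - (z - (a:ℂ)) ^ ((1:ℂ)/2) * (z - (b:ℂ)) ^ ((1:ℂ)/2))
        - (1/(c:ℂ)) * Complex.log (z - z ^ 2) = nuUp a b c z := by
  have hR := sqrtAB_im_pos (a := a) (b := b) hz
  have e1 : Complex.log ((c:ℂ)/2 - (z - (a:ℂ)) ^ ((1:ℂ)/2) * (z - (b:ℂ)) ^ ((1:ℂ)/2))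
      = Complex.log (sqrtAB a b z - (c:ℂ)/2) - π * Complex.I := by
    rw [← log_neg_of_im_pos]
    · rw [neg_sub]; rfl
    · simpa using hR
  have hz1 : 0 < (z - 1).im := by simpa using hz
  have e3 : Complex.log (1 - z) = Complex.log (z - 1) - π * Complex.I := by
    rw [← log_neg_of_im_pos hz1, neg_sub]
  have e2 : Complex.log (z - z ^ 2) = Complex.log z + Complex.log (z - 1) - π * Complex.I := by
    have : z - z ^ 2 = z * (1 - z) := by ring
    rw [this, Complex.log_mul, e3]
    · ring
    · rintro rfl; simp at hz
    · intro h0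
      have : z - 1 = 0 := by linear_combination -h0
      rw [this] at hz1; simp at hz1
    · have := Complex.arg_neg_eq_arg_sub_pi_of_im_pos hz1
      rw [neg_sub] at this
      rw [this]
      have h1 := arg_mem_of_im_pos hz
      have h2 := arg_mem_of_im_pos hz1
      constructor <;> linarith
  rw [e1, e2, nuUp]
  ring

/-! ### Boundary values of `ν` and a majorant -/

lemma tendsto_log_up {u : ℝ → ℂ} {w : ℂ} {l : Filter ℝ} (hu : Tendsto u l (𝓝 w))
    (him : ∀ᶠ e in l, 0 ≤ (u e).im) (hw : w ≠ 0) :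
    Tendsto (fun e => Complex.log (u e)) l (𝓝 (Complex.log w)) := by
  have hc : ContinuousWithinAt Complex.log {z | 0 ≤ z.im} w := by
    by_cases hs : w ∈ Complex.slitPlane
    · exact (continuousAt_clog hs).continuousWithinAt
    · rw [Complex.mem_slitPlane_iff] at hs
      push Not at hs
      refine Complex.continuousWithinAt_log_of_re_neg_of_im_zero
        (lt_of_le_of_ne hs.1 fun h0 => hw (Complex.ext h0 hs.2)) hs.2
  exact hc.tendsto.comp (tendsto_nhdsWithin_iff.2 ⟨hu, him⟩)

lemma tendsto_cpow_half_up {u : ℝ → ℂ} {w : ℂ} {l : Filter ℝ} (hu : Tendsto u l (𝓝 w))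
    (him : ∀ᶠ e in l, 0 ≤ (u e).im) (hw : w ≠ 0) :
    Tendsto (fun e => (u e) ^ ((1:ℂ)/2)) l (𝓝 (w ^ ((1:ℂ)/2))) := by
  rw [Complex.cpow_def_of_ne_zero hw]
  have h1 := (Complex.continuous_exp.tendsto _).comp
    ((tendsto_log_up hu him hw).mul_const ((1:ℂ)/2))
  refine h1.congr' ?_
  filter_upwards [hu.eventually_ne hw] with e he
  rw [Complex.cpow_def_of_ne_zero he]; rfl

lemma tendsto_vert (t : ℝ) :
    Tendsto (fun ε : ℝ => (t:ℂ) + ε * Complex.I) (𝓝[>] 0) (𝓝 (t:ℂ)) := by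
  have : Continuous (fun ε : ℝ => (t:ℂ) + ε * Complex.I) := by fun_prop
  have h := this.tendsto 0
  simp only [Complex.ofReal_zero, zero_mul, add_zero] at h
  exact h.mono_left nhdsWithin_le_nhds

lemma sub_half_ne (h : BranchPts a b c) {z : ℂ} (h0 : z ≠ 0) (h1 : z ≠ 1) :
    sqrtAB a b z - (c:ℂ)/2 ≠ 0 := by
  intro hh
  have := sqrtAB_factor h z
  rw [hh, zero_mul] at this
  rcases mul_eq_zero.1 this.symm with h2 | h2
  · exact h0 h2
  · exact h1 (sub_eq_zero.1 h2)

lemma tendsto_nuUp (h : BranchPts a b c) {t : ℝ} (h0 : t ≠ 0) (h1 : t ≠ 1) (hta : t ≠ a)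
    (htb : t ≠ b) :
    Tendsto (fun ε : ℝ => nuUp a b c (t + ε * Complex.I)) (𝓝[>] 0) (𝓝 (nuUp a b c t)) := by
  have hv := tendsto_vert t
  have hpos : ∀ᶠ e : ℝ in 𝓝[>] 0, 0 < ((t:ℂ) + e * Complex.I).im := by
    filter_upwards [self_mem_nhdsWithin] with e he
    simpa using he
  have h0' : (t:ℂ) ≠ 0 := by exact_mod_cast h0
  have h1' : (t:ℂ) ≠ 1 := by exact_mod_cast h1
  have sub (s : ℝ) (hs : t ≠ s) : Tendsto (fun ε : ℝ => ((t:ℂ) + ε * Complex.I - s) ^ ((1:ℂ)/2))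
      (𝓝[>] 0) (𝓝 (((t:ℂ) - s) ^ ((1:ℂ)/2))) := by
    refine tendsto_cpow_half_up (hv.sub_const _) ?_ (sub_ne_zero.2 (by exact_mod_cast hs))
    filter_upwards [hpos] with e he
    simpa using he.le
  have hR : Tendsto (fun ε : ℝ => sqrtAB a b (t + ε * Complex.I)) (𝓝[>] 0)
      (𝓝 (sqrtAB a b t)) := (sub a hta).mul (sub b htb)
  have l1 := tendsto_log_up (hR.sub_const ((c:ℂ)/2)) (by
    filter_upwards [hpos] with e he
    simpa using (sqrtAB_im_pos (a := a) (b := b) he).le) (sub_half_ne h h0' h1')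
  have l2 := tendsto_log_up hv (by filter_upwards [hpos] with e he using he.le) h0'
  have l3 := tendsto_log_up (hv.sub_const 1) (by
    filter_upwards [hpos] with e he
    simpa using he.le) (sub_ne_zero.2 h1')
  exact ((((l1.const_mul 2).sub l2).sub l3).sub_const _).const_mul _

lemma norm_log_le_add_pi (w : ℂ) : ‖Complex.log w‖ ≤ |Real.log ‖w‖| + π := by
  refine (Complex.norm_le_abs_re_add_abs_im _).trans ?_
  rw [Complex.log_re, Complex.log_im]
  gcongr
  exact Complex.abs_arg_le_pi w

lemma abs_log_le {p q M : ℝ} (hp : 0 < p) (hpq : p ≤ q) (hq : q ≤ M) (hM : 1 ≤ M) :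
    |Real.log q| ≤ |Real.log p| + Real.log M := by
  have h1 := Real.log_le_log hp hpq
  have h2 := Real.log_le_log (hp.trans_le hpq) hq
  have h3 := Real.log_nonneg hM
  have h4 := neg_abs_le (Real.log p)
  have h5 := abs_nonneg (Real.log p)
  rw [abs_le]; constructor <;> linarith

/-- The integrable majorant used for dominated convergence; it depends only on the real part.
The lower bound on `|R - c/2|` comes from `(R - c/2)(R + c/2) = z(z - 1)`. -/
lemma norm_nuUp_le (h : BranchPts a b c) {K t ε : ℝ} (hK : 1 ≤ K) (ht : |t| ≤ K)
    (h0 : t ≠ 0) (h1 : t ≠ 1) (hε0 : 0 ≤ ε) (hε1 : ε ≤ 1) :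
    ‖nuUp a b c (t + ε * Complex.I)‖ ≤
      (1/c) * (3 * |Real.log t| + 3 * |Real.log (t - 1)| + (6 * Real.log (K + 3) + 5 * π)) := by
  set z : ℂ := t + ε * Complex.I with hz
  set M := K + 3 with hM
  have hM1 : 1 ≤ M := by linarith
  have hMp : 0 < M := by linarith
  have hre : z.re = t := by simp [hz]
  have hzK : ‖z‖ ≤ K + 1 := by
    refine (norm_add_le _ _).trans ?_
    have : ‖(ε:ℂ) * Complex.I‖ = ε := by simp [abs_of_nonneg hε0]
    rw [this, Complex.norm_real, Real.norm_eq_abs]; linarith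
  have hsub (s : ℝ) (hs0 : 0 ≤ s) (hs : s ≤ 1) : ‖z - s‖ ≤ K + 2 := by
    refine (norm_sub_le _ _).trans ?_
    rw [Complex.norm_real, Real.norm_eq_abs, abs_of_nonneg hs0]; linarith
  have hR : ‖sqrtAB a b z‖ ≤ K + 2 := by
    have : ‖sqrtAB a b z‖ ^ 2 ≤ (K + 2) ^ 2 := by
      rw [← norm_pow, sqrtAB, mul_pow, cpow_half_sq, cpow_half_sq, norm_mul, sq]
      have := h.b_lt; have := h.a_pos; have := h.lt
      exact mul_le_mul (hsub a (by linarith) (by linarith)) (hsub b (by linarith) (by linarith))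
        (norm_nonneg _) (by linarith)
    exact le_of_sq_le_sq this (by linarith)
  have hc2 : ‖(c:ℂ)/2‖ ≤ 1 := by
    have := h.c_pos; have := h.c_lt
    rw [norm_div, Complex.norm_real, Real.norm_eq_abs, abs_of_pos h.c_pos]; norm_num; linarith
  have hm : ‖sqrtAB a b z - (c:ℂ)/2‖ ≤ M := by
    refine (norm_sub_le _ _).trans ?_; linarith
  have hp : ‖sqrtAB a b z + (c:ℂ)/2‖ ≤ M := by
    refine (norm_add_le _ _).trans ?_; linarith
  have hz0 : |t| ≤ ‖z‖ := by rw [← hre]; exact Complex.abs_re_le_norm z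
  have hz1 : |t - 1| ≤ ‖z - 1‖ := by
    have := Complex.abs_re_le_norm (z - 1)
    simpa [hre] using this
  have ht0 : 0 < |t| := abs_pos.2 h0
  have ht1 : 0 < |t - 1| := abs_pos.2 (sub_ne_zero.2 h1)
  have hlow : |t| * |t - 1| / M ≤ ‖sqrtAB a b z - (c:ℂ)/2‖ := by
    rw [div_le_iff₀ hMp]
    calc |t| * |t - 1| ≤ ‖z‖ * ‖z - 1‖ := by gcongr
      _ = ‖sqrtAB a b z - (c:ℂ)/2‖ * ‖sqrtAB a b z + (c:ℂ)/2‖ := by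
        rw [← norm_mul, ← norm_mul, sqrtAB_factor h]
      _ ≤ _ := by gcongr
  have b1 := abs_log_le (by positivity) hlow hm hM1
  have b2 := abs_log_le ht0 hz0 (hzK.trans (by linarith)) hM1
  have b3 := abs_log_le ht1 hz1 ((by simpa using hsub 1 zero_le_one le_rfl :
    ‖z - 1‖ ≤ K + 2).trans (by linarith)) hM1
  have b4 : |Real.log (|t| * |t - 1| / M)| ≤ |Real.log t| + |Real.log (t - 1)| + Real.log M := by
    rw [Real.log_div (by positivity) hMp.ne', Real.log_mul ht0.ne' ht1.ne', Real.log_abs,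
      Real.log_abs]
    refine (abs_sub _ _).trans ?_
    rw [abs_of_nonneg (Real.log_nonneg hM1)]
    have := abs_add_le (Real.log t) (Real.log (t - 1))
    linarith
  rw [Real.log_abs] at b2 b3
  have c1 := norm_log_le_add_pi (sqrtAB a b z - (c:ℂ)/2)
  have c2 := norm_log_le_add_pi z
  have c3 := norm_log_le_add_pi (z - 1)
  have c4 : ‖(π:ℂ) * Complex.I‖ = π := by simp [abs_of_pos Real.pi_pos]
  have c5 : ‖(2:ℂ) * Complex.log (sqrtAB a b z - (c:ℂ)/2)‖
      = 2 * ‖Complex.log (sqrtAB a b z - (c:ℂ)/2)‖ := by simp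
  have c6 : ‖(1/(c:ℂ))‖ = 1/c := by simp [abs_of_pos h.c_pos]
  rw [nuUp, norm_mul, c6]
  have := h.c_pos
  gcongr
  refine (norm_sub_le _ _).trans ?_
  have d1 := norm_sub_le (2 * Complex.log (sqrtAB a b z - (c:ℂ)/2) - Complex.log z)
    (Complex.log (z - 1))
  have d2 := norm_sub_le (2 * Complex.log (sqrtAB a b z - (c:ℂ)/2)) (Complex.log z)
  linarith

lemma measurable_nuUp : Measurable (nuUp a b c) := by
  unfold nuUp sqrtAB
  fun_prop

lemma ae_ne4 (p q r s : ℝ) : ∀ᵐ t : ℝ, t ≠ p ∧ t ≠ q ∧ t ≠ r ∧ t ≠ s := by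
  filter_upwards [MeasureTheory.Measure.ae_ne _ p, MeasureTheory.Measure.ae_ne _ q,
    MeasureTheory.Measure.ae_ne _ r, MeasureTheory.Measure.ae_ne _ s] with t h1 h2 h3 h4
  exact ⟨h1, h2, h3, h4⟩

lemma intervalIntegrable_majorant (C : ℝ) (x y : ℝ) : IntervalIntegrable
    (fun t => (1/c) * (3 * |Real.log t| + 3 * |Real.log (t - 1)| + C))
    MeasureTheory.volume x y := by
  have i1 : IntervalIntegrable Real.log MeasureTheory.volume x y :=
    intervalIntegral.intervalIntegrable_log'
  have i2 : IntervalIntegrable (fun t => Real.log (t - 1)) MeasureTheory.volume x y := by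
    have : IntervalIntegrable Real.log MeasureTheory.volume (x - 1) (y - 1) :=
      intervalIntegral.intervalIntegrable_log'
    simpa using this.comp_sub_right 1
  exact (((i1.abs.const_mul 3).add (i2.abs.const_mul 3)).add intervalIntegrable_const).const_mul _

lemma exists_abs_bound (x y : ℝ) : ∃ K : ℝ, 1 ≤ K ∧ ∀ t ∈ Set.uIoc x y, |t| ≤ K := by
  refine ⟨max 1 (|x| + |y|), le_max_left _ _, fun t ht => le_trans ?_ (le_max_right _ _)⟩
  have hx := abs_le.1 (le_refl |x|); have hy := abs_le.1 (le_refl |y|)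
  have := abs_nonneg x; have := abs_nonneg y
  rw [abs_le]
  rcases Set.mem_uIoc.1 ht with h | h <;> constructor <;> linarith [h.1, h.2]

lemma intervalIntegrable_nuUp (h : BranchPts a b c) (x y : ℝ) :
    IntervalIntegrable (fun t : ℝ => nuUp a b c t) MeasureTheory.volume x y := by
  obtain ⟨K, hK, hb⟩ := exists_abs_bound x y
  refine (intervalIntegrable_majorant (c := c) (6 * Real.log (K + 3) + 5 * π) x y).mono_fun
    (measurable_nuUp.comp Complex.measurable_ofReal).aestronglyMeasurable ?_
  filter_upwards [MeasureTheory.ae_restrict_mem measurableSet_uIoc,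
    MeasureTheory.ae_restrict_of_ae (ae_ne4 0 1 a b)] with t ht hne
  have := norm_nuUp_le h hK (hb t ht) hne.1 hne.2.1 le_rfl zero_le_one
  rw [Complex.ofReal_zero, zero_mul, add_zero] at this
  exact this.trans (le_abs_self _)

/-- An antiderivative of `nuUp` on the open upper half-plane with radial boundary values has
boundary increments given by integrating the boundary values of `nuUp`: integrate along
`t + iε` and let `ε → 0⁺` by dominated convergence. -/
lemma boundary_increment (h : BranchPts a b c) {f : ℂ → ℂ}
    (hf : ∀ z : ℂ, 0 < z.im → HasDerivAt f (nuUp a b c z) z) {x y : ℝ} {fx fy : ℂ}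
    (hx : Tendsto (fun ε : ℝ => f (x + ε * Complex.I)) (𝓝[>] 0) (𝓝 fx))
    (hy : Tendsto (fun ε : ℝ => f (y + ε * Complex.I)) (𝓝[>] 0) (𝓝 fy)) :
    ∫ t in x..y, nuUp a b c t = fy - fx := by
  obtain ⟨K, hK, hb⟩ := exists_abs_bound x y
  have hmem : ∀ᶠ e : ℝ in 𝓝[>] 0, 0 < e ∧ e ≤ 1 := by
    filter_upwards [Ioc_mem_nhdsGT (zero_lt_one' ℝ)] with e he using he
  have lim : Tendsto (fun ε : ℝ => ∫ t in x..y, nuUp a b c (t + ε * Complex.I)) (𝓝[>] 0)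
      (𝓝 (∫ t in x..y, nuUp a b c t)) := by
    refine intervalIntegral.tendsto_integral_filter_of_dominated_convergence _ ?_ ?_
      (intervalIntegrable_majorant (c := c) (6 * Real.log (K + 3) + 5 * π) x y) ?_
    · refine Eventually.of_forall fun e => ?_
      exact (measurable_nuUp.comp (by fun_prop)).aestronglyMeasurable
    · filter_upwards [hmem] with e he
      filter_upwards [ae_ne4 0 1 a b] with t hne ht
      exact norm_nuUp_le h hK (hb t ht) hne.1 hne.2.1 he.1.le he.2
    · filter_upwards [ae_ne4 0 1 a b] with t hne _
      exact tendsto_nuUp h hne.1 hne.2.1 hne.2.2.1 hne.2.2.2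
  refine tendsto_nhds_unique lim ((hy.sub hx).congr' ?_)
  filter_upwards [hmem] with e he
  symm
  refine intervalIntegral.integral_eq_sub_of_hasDerivAt (f := fun t : ℝ => f (t + e * Complex.I))
    (fun t _ => ?_) ?_
  · have h1 := hf (t + e * Complex.I) (by simpa using he.1)
    have h2 : HasDerivAt (fun w : ℂ => w + e * Complex.I) 1 (t:ℂ) := (hasDerivAt_id _).add_const _
    have := (h1.comp (t:ℂ) h2).comp_ofReal
    simpa using this
  · refine (intervalIntegrable_majorant (c := c) (6 * Real.log (K + 3) + 5 * π) x y).mono_fun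
      (measurable_nuUp.comp (by fun_prop)).aestronglyMeasurable ?_
    filter_upwards [MeasureTheory.ae_restrict_mem measurableSet_uIoc,
      MeasureTheory.ae_restrict_of_ae (ae_ne4 0 1 a b)] with t ht hne
    exact (norm_nuUp_le h hK (hb t ht) hne.1 hne.2.1 he.1.le he.2).trans (le_abs_self _)

/-! ### The boundary integrand on the real line -/

lemma nuUp_re (h : BranchPts a b c) {t : ℝ} (h0 : t ≠ 0) (h1 : t ≠ 1) :
    (nuUp a b c t).re = (1/c) * (Real.log ‖sqrtAB a b t - (c:ℂ)/2‖
      - Real.log ‖sqrtAB a b t + (c:ℂ)/2‖) := by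
  have h0' : (t:ℂ) ≠ 0 := by exact_mod_cast h0
  have h1' : (t:ℂ) ≠ 1 := by exact_mod_cast h1
  have hf := sqrtAB_factor h (t:ℂ)
  have hne : (t:ℂ) * (t - 1) ≠ 0 := mul_ne_zero h0' (sub_ne_zero.2 h1')
  have hp : sqrtAB a b t + (c:ℂ)/2 ≠ 0 := fun hh => hne (by rw [← hf, hh, mul_zero])
  have e : Real.log ‖sqrtAB a b t - (c:ℂ)/2‖ + Real.log ‖sqrtAB a b t + (c:ℂ)/2‖
      = Real.log ‖(t:ℂ)‖ + Real.log ‖(t:ℂ) - 1‖ := by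
    rw [← Real.log_mul (norm_ne_zero_iff.2 (sub_half_ne h h0' h1')) (norm_ne_zero_iff.2 hp),
      ← Real.log_mul (norm_ne_zero_iff.2 h0') (norm_ne_zero_iff.2 (sub_ne_zero.2 h1')),
      ← norm_mul, ← norm_mul, hf]
  rw [nuUp, show (1/(c:ℂ)) = ((1/c : ℝ) : ℂ) by push_cast; rfl, Complex.re_ofReal_mul]
  congr 1
  simp only [Complex.sub_re, Complex.mul_re, Complex.log_re, Complex.re_ofNat, Complex.im_ofNat,
    Complex.I_re, Complex.I_im, Complex.ofReal_im, zero_mul, mul_zero, sub_zero]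
  linarith

lemma nuUp_im (t : ℝ) :
    (nuUp a b c t).im = (1/c) * (2 * (sqrtAB a b t - (c:ℂ)/2).arg
      - (t:ℂ).arg - ((t - 1 : ℝ) : ℂ).arg - π) := by
  rw [nuUp, show (1/(c:ℂ)) = ((1/c : ℝ) : ℂ) by push_cast; rfl, Complex.im_ofReal_mul]
  simp [Complex.log_im]

lemma cpow_half_of_nonneg {x : ℝ} (hx : 0 ≤ x) : (x:ℂ) ^ ((1:ℂ)/2) = (√x : ℝ) := by
  rw [Real.sqrt_eq_rpow, Complex.ofReal_cpow hx]; simp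

lemma cpow_half_of_nonpos {x : ℝ} (hx : x ≤ 0) :
    (x:ℂ) ^ ((1:ℂ)/2) = (√(-x) : ℝ) * Complex.I := by
  rw [Complex.ofReal_cpow_of_nonpos hx, ← Complex.ofReal_neg, cpow_half_of_nonneg (by linarith),
    show (π:ℂ) * Complex.I * (1/2) = π / 2 * Complex.I by ring, Complex.exp_pi_div_two_mul_I]

lemma sqrtAB_right (hab : a < b) {t : ℝ} (ht : b ≤ t) :
    sqrtAB a b t = ((√(t - a) * √(t - b) : ℝ) : ℂ) := by
  rw [sqrtAB, ← Complex.ofReal_sub, ← Complex.ofReal_sub, cpow_half_of_nonneg (by linarith),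
    cpow_half_of_nonneg (by linarith)]
  push_cast; rfl

lemma sqrtAB_mid {t : ℝ} (ha : a ≤ t) (hb : t ≤ b) :
    sqrtAB a b t = ((√((t - a) * (b - t)) : ℝ) : ℂ) * Complex.I := by
  rw [sqrtAB, ← Complex.ofReal_sub, ← Complex.ofReal_sub, cpow_half_of_nonneg (by linarith),
    cpow_half_of_nonpos (by linarith), neg_sub, Real.sqrt_mul (by linarith)]
  push_cast; ring

lemma sqrtAB_left (hab : a < b) {t : ℝ} (ht : t ≤ a) :
    sqrtAB a b t = ((-(√(a - t) * √(b - t)) : ℝ) : ℂ) := by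
  rw [sqrtAB, ← Complex.ofReal_sub, ← Complex.ofReal_sub, cpow_half_of_nonpos (by linarith),
    cpow_half_of_nonpos (by linarith), neg_sub, neg_sub]
  push_cast
  linear_combination (√(a - t) : ℂ) * √(b - t) * Complex.I_sq

lemma nuUp_re_neg (h : BranchPts a b c) {t : ℝ} (hb : b < t) (h1 : t ≠ 1) :
    (nuUp a b c t).re < 0 := by
  have hr : 0 < √(t - a) * √(t - b) := by
    have := h.lt
    exact mul_pos (Real.sqrt_pos.2 (by linarith)) (Real.sqrt_pos.2 (by linarith))
  have h0 : t ≠ 0 := (h.b_pos.trans hb).ne'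
  have hne := sub_half_ne h (z := (t:ℂ)) (by exact_mod_cast h0) (by exact_mod_cast h1)
  have hc := h.c_pos
  rw [nuUp_re h h0 h1]
  rw [sqrtAB_right h.lt hb.le] at *
  refine mul_neg_of_pos_of_neg (by positivity) (sub_neg.2 (Real.log_lt_log (norm_pos_iff.2 hne) ?_))
  set r := √(t - a) * √(t - b)
  rw [show (c:ℂ)/2 = ((c/2 : ℝ) : ℂ) by push_cast; rfl, ← Complex.ofReal_sub, ← Complex.ofReal_add,
    Complex.norm_real, Complex.norm_real, Real.norm_eq_abs, Real.norm_eq_abs,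
    abs_of_pos (by positivity : 0 < r + c/2), abs_lt]
  constructor <;> linarith

lemma nuUp_re_pos (h : BranchPts a b c) {t : ℝ} (ha : t < a) (h0 : t ≠ 0) :
    0 < (nuUp a b c t).re := by
  have hr : 0 < √(a - t) * √(b - t) := by
    have := h.lt
    exact mul_pos (Real.sqrt_pos.2 (by linarith)) (Real.sqrt_pos.2 (by linarith))
  have h1 : t ≠ 1 := by have := h.lt; have := h.b_lt; exact (by linarith : t < 1).ne
  have h0' : (t:ℂ) ≠ 0 := by exact_mod_cast h0
  have h1' : (t:ℂ) ≠ 1 := by exact_mod_cast h1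
  have hf := sqrtAB_factor h (t:ℂ)
  have hp : sqrtAB a b t + (c:ℂ)/2 ≠ 0 := fun hh =>
    mul_ne_zero h0' (sub_ne_zero.2 h1') (by rw [← hf, hh, mul_zero])
  have hc := h.c_pos
  rw [nuUp_re h h0 h1]
  rw [sqrtAB_left h.lt ha.le] at *
  refine mul_pos (by positivity) (sub_pos.2 (Real.log_lt_log (norm_pos_iff.2 hp) ?_))
  set r := √(a - t) * √(b - t)
  rw [show (c:ℂ)/2 = ((c/2 : ℝ) : ℂ) by push_cast; rfl, ← Complex.ofReal_sub, ← Complex.ofReal_add,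
    Complex.norm_real, Complex.norm_real, Real.norm_eq_abs, Real.norm_eq_abs,
    abs_of_neg (by linarith : -r - c/2 < 0), abs_lt]
  constructor <;> linarith

lemma nuUp_re_mid (h : BranchPts a b c) {t : ℝ} (ha : a < t) (hb : t < b) :
    (nuUp a b c t).re = 0 := by
  have := h.a_pos; have := h.b_lt
  rw [nuUp_re h (by linarith) (by linarith), sqrtAB_mid ha.le hb.le]
  set r := √((t - a) * (b - t))
  have : ‖(r:ℂ) * Complex.I - (c:ℂ)/2‖ = ‖(r:ℂ) * Complex.I + (c:ℂ)/2‖ := by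
    rw [show (c:ℂ)/2 = ((c/2 : ℝ) : ℂ) by push_cast; rfl, Complex.norm_def, Complex.norm_def]
    congr 1
    simp only [Complex.normSq_apply, Complex.add_re, Complex.sub_re, Complex.add_im,
      Complex.sub_im, Complex.re_ofReal_mul, Complex.im_ofReal_mul, Complex.I_re, Complex.I_im,
      Complex.ofReal_re, Complex.ofReal_im]
    ring
  rw [this]; ring

lemma nuUp_im_left (h : BranchPts a b c) {t : ℝ} (ht : t < 0) :
    (nuUp a b c t).im = -(π / c) := by
  have := h.a_pos
  have hc := h.c_pos
  have hr : 0 ≤ √(a - t) * √(b - t) := by positivity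
  rw [nuUp_im, sqrtAB_left h.lt (by linarith), show (c:ℂ)/2 = ((c/2 : ℝ) : ℂ) by push_cast; rfl,
    ← Complex.ofReal_sub, Complex.arg_ofReal_of_neg (by linarith), Complex.arg_ofReal_of_neg ht,
    Complex.arg_ofReal_of_neg (by linarith)]
  ring

lemma nuUp_im_zero_a (h : BranchPts a b c) {t : ℝ} (h0 : 0 < t) (ht : t < a) :
    (nuUp a b c t).im = 0 := by
  have := h.lt; have := h.b_lt
  have hc := h.c_pos
  have hr : 0 ≤ √(a - t) * √(b - t) := by positivity
  rw [nuUp_im, sqrtAB_left h.lt (by linarith), show (c:ℂ)/2 = ((c/2 : ℝ) : ℂ) by push_cast; rfl,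
    ← Complex.ofReal_sub, Complex.arg_ofReal_of_neg (by linarith),
    Complex.arg_ofReal_of_nonneg h0.le, Complex.arg_ofReal_of_neg (by linarith)]
  ring

lemma sq_right (h : BranchPts a b c) {t : ℝ} (ht : b ≤ t) :
    (√(t - a) * √(t - b)) ^ 2 = t ^ 2 - t + c ^ 2 / 4 := by
  have := h.lt
  rw [mul_pow, Real.sq_sqrt (by linarith), Real.sq_sqrt (by linarith)]
  linear_combination h.prod - t * h.sum

lemma nuUp_im_b_one (h : BranchPts a b c) {t : ℝ} (hb : b < t) (ht : t < 1) :
    (nuUp a b c t).im = 0 := by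
  have hc := h.c_pos
  have h0 := h.b_pos
  have hr : √(t - a) * √(t - b) < c / 2 := by
    refine lt_of_pow_lt_pow_left₀ 2 (by positivity) ?_
    rw [sq_right h hb.le]; nlinarith
  rw [nuUp_im, sqrtAB_right h.lt hb.le, show (c:ℂ)/2 = ((c/2 : ℝ) : ℂ) by push_cast; rfl,
    ← Complex.ofReal_sub, Complex.arg_ofReal_of_neg (by linarith),
    Complex.arg_ofReal_of_nonneg (by linarith), Complex.arg_ofReal_of_neg (by linarith)]
  ring

lemma nuUp_im_right (h : BranchPts a b c) {t : ℝ} (ht : 1 < t) :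
    (nuUp a b c t).im = -(π / c) := by
  have hc := h.c_pos
  have hb := h.b_lt
  have hr : c / 2 < √(t - a) * √(t - b) := by
    refine lt_of_pow_lt_pow_left₀ 2 (by positivity) ?_
    rw [sq_right h (by linarith)]; nlinarith
  rw [nuUp_im, sqrtAB_right h.lt (by linarith), show (c:ℂ)/2 = ((c/2 : ℝ) : ℂ) by push_cast; rfl,
    ← Complex.ofReal_sub, Complex.arg_ofReal_of_nonneg (by linarith),
    Complex.arg_ofReal_of_nonneg (by linarith), Complex.arg_ofReal_of_nonneg (by linarith)]
  ring

lemma nuUp_im_mid (h : BranchPts a b c) {t : ℝ} (ha : a < t) (hb : t < b) :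
    (nuUp a b c t).im = -(2 / c) * Real.arctan (2 * √((t - a) * (b - t)) / c) := by
  have := h.a_pos; have := h.b_lt
  have hc := h.c_pos
  set r := √((t - a) * (b - t)) with hrdef
  have hr : 0 < r := Real.sqrt_pos.2 (mul_pos (by linarith) (by linarith))
  have e : ((r:ℂ) * Complex.I - (c:ℂ)/2).arg = π - Real.arctan (2 * r / c) := by
    set w : ℂ := (c:ℂ)/2 - (r:ℂ) * Complex.I with hw
    have hre : w.re = c / 2 := by
      rw [hw, show (c:ℂ)/2 = ((c/2 : ℝ) : ℂ) by push_cast; rfl]; simp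
    have him : w.im = -r := by
      rw [hw, show (c:ℂ)/2 = ((c/2 : ℝ) : ℂ) by push_cast; rfl]; simp
    rw [show (r:ℂ) * Complex.I - (c:ℂ)/2 = -w by rw [hw]; ring,
      Complex.arg_neg_eq_arg_add_pi_of_im_neg (by rw [him]; linarith)]
    have h1 : |w.arg| < π / 2 := Complex.abs_arg_lt_pi_div_two_iff.2 (Or.inl (by rw [hre]; positivity))
    have h2 := Complex.tan_arg w
    rw [hre, him] at h2
    have h3 : Real.arctan (2 * r / c) = - w.arg := by
      rw [← Real.arctan_tan (abs_lt.1 h1).1 (abs_lt.1 h1).2, h2, ← Real.arctan_neg]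
      congr 1; field_simp
    rw [h3]; ring
  rw [nuUp_im, sqrtAB_mid ha.le hb.le, ← hrdef, e, Complex.arg_ofReal_of_nonneg (by linarith),
    Complex.arg_ofReal_of_neg (by linarith)]
  ring

/-! ### The integral over the cut `[a, b]` -/

/-- An explicit antiderivative, found by parts, of `t ↦ arctan (2√((t-a)(b-t))/c)`. -/
lemma hasDerivAt_primitive (h : BranchPts a b c) {t : ℝ} (ha : a < t) (hb : t < b) :
    HasDerivAt (fun t : ℝ => (t - 1/2) * Real.arctan (2 * √((t - a) * (b - t)) / c)
      - (c/2) * Real.arctan ((t - 1/2) / √((t - a) * (b - t)))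
      + (1/2) * Real.arctan (c * ((t - 1/2) / √((t - a) * (b - t)))))
      (Real.arctan (2 * √((t - a) * (b - t)) / c)) t := by
  have hc := h.c_pos
  have hc1 := h.c_lt
  have hq : 0 < (t - a) * (b - t) := mul_pos (by linarith) (by linarith)
  have hr : 0 < √((t - a) * (b - t)) := Real.sqrt_pos.2 hq
  have hr2 : √((t - a) * (b - t)) ^ 2 = t - t ^ 2 - c ^ 2 / 4 := by
    rw [Real.sq_sqrt hq.le]; linear_combination t * h.sum - h.prod
  have dq : HasDerivAt (fun t : ℝ => (t - a) * (b - t)) (1 * (b - t) + (t - a) * (-1)) t :=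
    ((hasDerivAt_id t).sub_const a).mul ((hasDerivAt_id t).const_sub b)
  have dr := dq.sqrt hq.ne'
  have du : HasDerivAt (fun t : ℝ => t - 1/2) 1 t := (hasDerivAt_id t).sub_const _
  have dw := du.div dr hr.ne'
  have H := ((du.mul ((dr.const_mul 2).div_const c).arctan).sub (dw.arctan.const_mul (c/2))).add
    ((dw.const_mul c).arctan.const_mul (1/2))
  refine H.congr_deriv ?_
  simp only [Pi.div_apply]
  set r := √((t - a) * (b - t)) with hrd
  have hS : 0 < t - t ^ 2 := by nlinarith
  have e0 : 1 * (b - t) + (t - a) * (-1) = 1 - 2 * t := by linear_combination h.sum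
  have e1 : 1 + (2 * r / c) ^ 2 = 4 * (t - t ^ 2) / c ^ 2 := by
    field_simp; linear_combination 4 * hr2
  have e2 : 1 + ((t - 1/2) / r) ^ 2 = (1 - c ^ 2) / 4 / r ^ 2 := by
    field_simp; linear_combination 16 * hr2
  have e3 : 1 + (c * ((t - 1/2) / r)) ^ 2 = (1 - c ^ 2) * (t - t ^ 2) / r ^ 2 := by
    field_simp; linear_combination 4 * hr2
  have e4 : 1 * r - (t - 1/2) * ((1 - 2 * t) / (2 * r)) = (1 - c ^ 2) / 4 / r := by
    field_simp; linear_combination 16 * hr2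
  have hcc : 1 - c ^ 2 ≠ 0 := by nlinarith
  rw [e0, e1, e2, e3, e4]
  have hS' : (1 - t) ≠ 0 := by intro hh; have : t = 1 := by linarith
                               subst this; simp at hS
  have ht' : t ≠ 0 := by rintro rfl; simp at hS
  field_simp
  ring

lemma integral_arctan (h : BranchPts a b c) :
    ∫ t in a..b, Real.arctan (2 * √((t - a) * (b - t)) / c) = (1 - c) * π / 2 := by
  have hc := h.c_pos
  have hab := h.lt
  have hs := h.sum
  have cr : Continuous (fun t : ℝ => √((t - a) * (b - t))) := by fun_prop
  have hpos : ∀ t, a < t → t < b → 0 < √((t - a) * (b - t)) := fun t h1 h2 =>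
    Real.sqrt_pos.2 (mul_pos (by linarith) (by linarith))
  have cA : Continuous (fun t : ℝ => (t - 1/2) * Real.arctan (2 * √((t - a) * (b - t)) / c)) := by
    fun_prop
  have la : Tendsto (fun t : ℝ => (t - 1/2) / √((t - a) * (b - t))) (𝓝[>] a) atBot := by
    simp only [div_eq_mul_inv]
    refine Tendsto.neg_mul_atTop (C := a - 1/2) (by linarith) ?_ ?_
    · exact ((continuous_id.sub continuous_const).tendsto a).mono_left nhdsWithin_le_nhds
    · refine tendsto_inv_nhdsGT_zero.comp (tendsto_nhdsWithin_iff.2 ⟨?_, ?_⟩)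
      · have := cr.tendsto a
        simp only [sub_self, zero_mul, Real.sqrt_zero] at this
        exact this.mono_left nhdsWithin_le_nhds
      · filter_upwards [Ioo_mem_nhdsGT hab] with t ht using hpos t ht.1 ht.2
  have lb : Tendsto (fun t : ℝ => (t - 1/2) / √((t - a) * (b - t))) (𝓝[<] b) atTop := by
    simp only [div_eq_mul_inv]
    refine Tendsto.pos_mul_atTop (C := b - 1/2) (by linarith) ?_ ?_
    · exact ((continuous_id.sub continuous_const).tendsto b).mono_left nhdsWithin_le_nhds
    · refine tendsto_inv_nhdsGT_zero.comp (tendsto_nhdsWithin_iff.2 ⟨?_, ?_⟩)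
      · have := cr.tendsto b
        simp only [sub_self, mul_zero, Real.sqrt_zero] at this
        exact this.mono_left nhdsWithin_le_nhds
      · filter_upwards [Ioo_mem_nhdsLT hab] with t ht using hpos t ht.1 ht.2
  have tb := Real.tendsto_arctan_atTop.mono_right (nhdsWithin_le_nhds (a := π/2) (s := Set.Iio (π/2)))
  have ta := Real.tendsto_arctan_atBot.mono_right
    (nhdsWithin_le_nhds (a := -(π/2)) (s := Set.Ioi (-(π/2))))
  have Ta := (((cA.tendsto a).mono_left (nhdsWithin_le_nhds (s := Set.Ioi a))).sub
    ((ta.comp la).const_mul (c/2))).add ((ta.comp (la.const_mul_atBot hc)).const_mul (1/2))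
  have Tb := (((cA.tendsto b).mono_left (nhdsWithin_le_nhds (s := Set.Iio b))).sub
    ((tb.comp lb).const_mul (c/2))).add ((tb.comp (lb.const_mul_atTop hc)).const_mul (1/2))
  rw [intervalIntegral.integral_eq_sub_of_hasDerivAt_of_tendsto hab
    (fun t ht => hasDerivAt_primitive h ht.1 ht.2) ?_ Ta Tb]
  · simp; ring
  · refine Continuous.intervalIntegrable ?_ _ _
    fun_prop

/-! ### Mapping properties of the boundary values -/

lemma lt_of_integral_neg {F G : ℝ → ℝ} {x y : ℝ} (hxy : x < y)
    (hi : IntervalIntegrable G MeasureTheory.volume x y) (hF : ∫ t in x..y, G t = F y - F x)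
    (hG : ∀ t ∈ Set.Ioo x y, G t < 0) : F y < F x := by
  have := intervalIntegral.intervalIntegral_pos_of_pos_on hi.neg
    (fun t ht => by simpa using hG t ht) hxy
  simp only [Pi.neg_apply, intervalIntegral.integral_neg] at this
  linarith

lemma lt_of_integral_pos {F G : ℝ → ℝ} {x y : ℝ} (hxy : x < y)
    (hi : IntervalIntegrable G MeasureTheory.volume x y) (hF : ∫ t in x..y, G t = F y - F x)
    (hG : ∀ t ∈ Set.Ioo x y, 0 < G t) : F x < F y := by
  have := intervalIntegral.intervalIntegral_pos_of_pos_on hi hG hxy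
  linarith

lemma eq_of_integral_const {F G : ℝ → ℝ} {x y k : ℝ} (hxy : x ≤ y)
    (hF : ∫ t in x..y, G t = F y - F x)
    (hG : ∀ t ∈ Set.Ioo x y, G t = k) : F y - F x = (y - x) * k := by
  rw [← hF, intervalIntegral.integral_congr_uIoo (g := fun _ => k)
    (fun t ht => hG t (by rwa [Set.uIoo_of_le hxy] at ht))]
  simp

/-- The mapping properties of the upper boundary values `φp` of any antiderivative of `nuUp` on the
open upper half-plane, normalized by `φp b = 0`. The lower boundary values are covered too, by
applying this to the reflected function `z ↦ conj (f (conj z))`. -/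
lemma upper_boundary (h : BranchPts a b c) {f : ℂ → ℂ}
    (hf : ∀ z : ℂ, 0 < z.im → HasDerivAt f (nuUp a b c z) z) {φp : ℝ → ℂ}
    (hφ : ∀ x : ℝ, Tendsto (fun ε : ℝ => f (x + ε * Complex.I)) (𝓝[>] 0) (𝓝 (φp x)))
    (hb0 : φp b = 0) :
    (∀ x : ℝ, 1 < x → (φp x).re < (φp 1).re ∧ (φp x).im = (1 - x) * π / c) ∧
    (∀ x : ℝ, b < x → x ≤ 1 → (φp x).im = 0 ∧ (φp x).re < 0) ∧
    φp a = (1/(c:ℂ) - 1) * (π : ℂ) * Complex.I ∧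
    (∀ x : ℝ, a < x → x < b → (φp x).re = 0 ∧ 0 < (φp x).im) ∧
    (∀ x : ℝ, 0 ≤ x → x < a → (φp x).re < 0 ∧ (φp x).im = (1/c - 1) * π) ∧
    (∀ x : ℝ, x < 0 → (φp x).re < (φp 0).re ∧ (φp x).im = ((1 - c)/c - x/c) * π) := by
  have hc := h.c_pos
  have ha0 := h.a_pos
  have hab := h.lt
  have hb1 := h.b_lt
  have ii (x y : ℝ) := intervalIntegrable_nuUp h x y
  have inc (x y : ℝ) := boundary_increment h hf (hφ x) (hφ y)
  have ire (x y : ℝ) : IntervalIntegrable (fun t : ℝ => (nuUp a b c t).re)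
      MeasureTheory.volume x y :=
    ⟨Complex.reCLM.integrable_comp (ii x y).1, Complex.reCLM.integrable_comp (ii x y).2⟩
  have iim (x y : ℝ) : IntervalIntegrable (fun t : ℝ => (nuUp a b c t).im)
      MeasureTheory.volume x y :=
    ⟨Complex.imCLM.integrable_comp (ii x y).1, Complex.imCLM.integrable_comp (ii x y).2⟩
  have Ire (x y : ℝ) : ∫ t in x..y, (nuUp a b c t).re = (φp y).re - (φp x).re := by
    have := Complex.reCLM.intervalIntegral_comp_comm (ii x y)
    rw [inc x y] at this
    simpa using this
  have Iim (x y : ℝ) : ∫ t in x..y, (nuUp a b c t).im = (φp y).im - (φp x).im := by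
    have := Complex.imCLM.intervalIntegral_comp_comm (ii x y)
    rw [inc x y] at this
    simpa using this
  have hbre : (φp b).re = 0 := by rw [hb0]; rfl
  have hbim : (φp b).im = 0 := by rw [hb0]; rfl
  have P2 : ∀ x : ℝ, b < x → x ≤ 1 → (φp x).im = 0 ∧ (φp x).re < 0 := by
    intro x hx hx1
    constructor
    · have := eq_of_integral_const hx.le (F := fun t => (φp t).im) (Iim b x)
        (fun t ht => nuUp_im_b_one h ht.1 (ht.2.trans_le hx1))
      linarith
    · have := lt_of_integral_neg hx (F := fun t => (φp t).re) (ire b x) (Ire b x)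
        (fun t ht => nuUp_re_neg h ht.1 (ht.2.trans_le hx1).ne)
      linarith
  have Pmid : ∀ x : ℝ, a ≤ x → x ≤ b → (φp x).re = 0 := by
    intro x hx hx1
    have := eq_of_integral_const hx1 (F := fun t => (φp t).re) (Ire x b)
        (fun t ht => nuUp_re_mid h (hx.trans_lt ht.1) ht.2)
    linarith
  have Pa : (φp a).im = (1/c - 1) * π := by
    have h1 : ∫ t in a..b, (nuUp a b c t).im = -(2 / c) * ((1 - c) * π / 2) := by
      rw [← integral_arctan h, ← intervalIntegral.integral_const_mul]
      refine intervalIntegral.integral_congr_uIoo fun t ht => ?_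
      rw [Set.uIoo_of_le hab.le] at ht
      exact nuUp_im_mid h ht.1 ht.2
    rw [Iim, hbim] at h1
    have : (φp a).im = (2 / c) * ((1 - c) * π / 2) := by linarith
    rw [this]; field_simp
  have P5 : ∀ x : ℝ, 0 ≤ x → x < a → (φp x).re < 0 ∧ (φp x).im = (1/c - 1) * π := by
    intro x hx hxa
    constructor
    · have := lt_of_integral_pos hxa (F := fun t => (φp t).re) (ire x a) (Ire x a)
        (fun t ht => nuUp_re_pos h ht.2 (hx.trans_lt ht.1).ne')
      simp only [Pmid a le_rfl hab.le] at this; linarith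
    · have := eq_of_integral_const hxa.le (F := fun t => (φp t).im) (Iim x a)
        (fun t ht => nuUp_im_zero_a h (hx.trans_lt ht.1) ht.2)
      linarith
  refine ⟨fun x hx => ⟨?_, ?_⟩, P2, ?_, fun x hx hxb => ⟨Pmid x hx.le hxb.le, ?_⟩, P5,
    fun x hx => ⟨?_, ?_⟩⟩
  · exact lt_of_integral_neg hx (F := fun t => (φp t).re) (ire 1 x) (Ire 1 x)
      (fun t ht => nuUp_re_neg h (hb1.trans ht.1) ht.1.ne')
  · have := eq_of_integral_const hx.le (F := fun t => (φp t).im) (Iim 1 x)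
      (fun t ht => nuUp_im_right h ht.1)
    rw [(P2 1 hb1 le_rfl).1] at this
    rw [sub_zero] at this
    rw [this]; ring
  · apply Complex.ext
    · rw [Pmid a le_rfl hab.le,
        show (1/(c:ℂ) - 1) * (π : ℂ) = (((1/c - 1) * π : ℝ) : ℂ) by push_cast; rfl]
      simp
    · rw [Pa, show (1/(c:ℂ) - 1) * (π : ℂ) = (((1/c - 1) * π : ℝ) : ℂ) by push_cast; rfl]
      simp
  · have := lt_of_integral_neg hxb (F := fun t => (φp t).im) (iim x b) (Iim x b) (fun t ht => by
      have hat := hx.trans ht.1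
      rw [nuUp_im_mid h hat ht.2, neg_mul, neg_lt_zero]
      have hr : 0 < √((t - a) * (b - t)) :=
        Real.sqrt_pos.2 (mul_pos (by linarith) (by linarith [ht.2]))
      exact mul_pos (by positivity) (Real.arctan_pos.2 (by positivity)))
    simpa [hbim] using this
  · exact lt_of_integral_pos hx (F := fun t => (φp t).re) (ire x 0) (Ire x 0)
      (fun t ht => nuUp_re_pos h (ht.2.trans ha0) ht.2.ne)
  · have := eq_of_integral_const hx.le (F := fun t => (φp t).im) (Iim x 0)
      (fun t ht => nuUp_im_left h ht.2)
    simp only [(P5 0 le_rfl ha0).2] at this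
    have e : (φp x).im = (1/c - 1) * π - (0 - x) * -(π/c) := by linarith
    rw [e]; field_simp; ring

open ComplexConjugate in
/-- The symmetry `ν (conj z) = conj (ν z)`, with `ν` in its upper half-plane form. -/
lemma nu_conj {z : ℂ} (hz : 0 < z.im) :
    conj ((2/(c:ℂ)) * Complex.log ((c:ℂ)/2
        - (conj z - (a:ℂ)) ^ ((1:ℂ)/2) * (conj z - (b:ℂ)) ^ ((1:ℂ)/2))
        - (1/(c:ℂ)) * Complex.log (conj z - (conj z) ^ 2)) = nuUp a b c z := by
  have h2 : conj (2:ℂ) = 2 := map_ofNat _ 2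
  have hs (s : ℝ) : (conj z - (s:ℂ)) ^ ((1:ℂ)/2) = conj ((z - (s:ℂ)) ^ ((1:ℂ)/2)) := by
    have : conj z - (s:ℂ) = conj (z - s) := by simp
    rw [this, Complex.conj_cpow]
    · simp [h2]
    · exact (arg_mem_of_im_pos (by simpa using hz)).2.ne
  have hc : conj ((c:ℂ)/2) = (c:ℂ)/2 := by simp [h2]
  have hR := sqrtAB_im_pos (a := a) (b := b) hz
  have e1 : Complex.log ((c:ℂ)/2
        - (conj z - (a:ℂ)) ^ ((1:ℂ)/2) * (conj z - (b:ℂ)) ^ ((1:ℂ)/2))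
      = conj (Complex.log ((c:ℂ)/2
        - (z - (a:ℂ)) ^ ((1:ℂ)/2) * (z - (b:ℂ)) ^ ((1:ℂ)/2))) := by
    rw [hs, hs, ← Complex.log_conj]
    · rw [map_sub, map_mul, hc]
    · refine (Complex.arg_lt_pi_iff.2 (Or.inr ?_)).ne
      rw [sqrtAB] at hR
      rw [Complex.sub_im, show (c:ℂ)/2 = ((c/2 : ℝ) : ℂ) by push_cast; rfl, Complex.ofReal_im]
      exact (by linarith : _ < (0:ℝ)).ne
  have e2 : Complex.log (conj z - (conj z) ^ 2) = conj (Complex.log (z - z ^ 2)) := by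
    rw [← Complex.log_conj]
    · simp
    · refine (Complex.arg_lt_pi_iff.2 ?_).ne
      -- `z - z²` is real only on the line `Re z = 1/2`, where it is positive.
      by_contra! hcon
      simp only [sq, Complex.sub_re, Complex.mul_re, Complex.sub_im, Complex.mul_im] at hcon
      have h1 : z.im * (1 - 2 * z.re) = 0 := by linarith [hcon.2]
      have h2 : z.re = 1/2 := by
        rcases mul_eq_zero.1 h1 with h3 | h3 <;> linarith
      rw [h2] at hcon
      nlinarith [hcon.1]
  rw [e1, e2, ← nu_eq_nuUp hz]
  simp [h2]

/-- mapping properties of the auxiliary function `φ*(z) = ∫_b^z ν(s) ds`,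
characterized as the antiderivative of `ν` on `D = ℂ∖((−∞,b] ∪ [1,+∞))` vanishing at `b`.
Boundary values `φ*_±(x) = lim_{ε→0⁺} φ*(x ± iε)`. -/
theorem phi_star_mapping_properties
    (c : ℝ) (hc0 : 0 < c) (hc1 : c < 1)
    (a b : ℝ)
    (ha : a = (1 - Real.sqrt (1 - c ^ 2)) / 2)
    (hb : b = (1 + Real.sqrt (1 - c ^ 2)) / 2)
    (ν : ℂ → ℂ)
    (hν : ∀ z, ν z =
      (2/(c:ℂ)) * Complex.log ((c:ℂ)/2 - (z - (a:ℂ)) ^ ((1:ℂ)/2) * (z - (b:ℂ)) ^ ((1:ℂ)/2))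
        - (1/(c:ℂ)) * Complex.log (z - z ^ 2))
    (D : Set ℂ)
    (hD : D = {z : ℂ | ¬ (z.im = 0 ∧ (z.re ≤ b ∨ 1 ≤ z.re))})
    (φs : ℂ → ℂ)
    (hderiv : ∀ z ∈ D, HasDerivAt φs (ν z) z)
    (hbase : Tendsto φs (nhdsWithin (b:ℂ) D) (𝓝 0))
    (φp φm : ℝ → ℂ)
    (hφp : ∀ x : ℝ, Tendsto (fun ε : ℝ => φs (↑x + ↑ε * Complex.I)) (𝓝[>] 0) (𝓝 (φp x)))
    (hφm : ∀ x : ℝ, Tendsto (fun ε : ℝ => φs (↑x - ↑ε * Complex.I)) (𝓝[>] 0) (𝓝 (φm x)))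
    (φ1 : ℂ)
    (h1 : Tendsto φs (nhdsWithin (1:ℂ) D) (𝓝 φ1)) :
    -- (i) x ∈ (1,+∞)
    (∀ x : ℝ, 1 < x →
        (φp x).re < φ1.re ∧ (φm x).re < φ1.re ∧
        (φp x).im = (1 - x) * π / c ∧ (φm x).im = -((1 - x) * π / c))
    -- (ii) x ∈ (b,1]
    ∧ (∀ x : ℝ, b < x → x < 1 → (φs (x:ℂ)).im = 0 ∧ (φs (x:ℂ)).re < 0)
    ∧ (φ1.im = 0 ∧ φ1.re < 0)
    -- (iii) φ*(b) = 0 and φ*_±(a) = ±(1/c − 1)πi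
    ∧ Tendsto φs (nhdsWithin (b:ℂ) D) (𝓝 0)
    ∧ (φp a = (1/(c:ℂ) - 1) * (Real.pi : ℂ) * Complex.I ∧
       φm a = -((1/(c:ℂ) - 1) * (Real.pi : ℂ) * Complex.I))
    -- (iv) x ∈ (a,b)
    ∧ (∀ x : ℝ, a < x → x < b →
        (φp x).re = 0 ∧ (φm x).re = 0 ∧
        (φp x).arg = π/2 ∧ (φm x).arg = -(π/2))
    -- (v) x ∈ [0,a)
    ∧ (∀ x : ℝ, 0 ≤ x → x < a →
        (φp x).re < 0 ∧ (φm x).re < 0 ∧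
        (φp x).im = (1/c - 1) * π ∧ (φm x).im = -((1/c - 1) * π))
    -- (vi) x ∈ (−∞,0)
    ∧ (∀ x : ℝ, x < 0 →
        (φp x).re < (φp 0).re ∧ (φm x).re < (φm 0).re ∧
        (φp x).im = ((1 - c)/c - x/c) * π ∧ (φm x).im = -(((1 - c)/c - x/c) * π)) := by
  have h := BranchPts.of_eq hc0 hc1 ha hb
  have ha0 := h.a_pos
  have hb1 := h.b_lt
  have hD_of (z : ℂ) (hz : z.im ≠ 0) : z ∈ D := by
    rw [hD]; exact fun hh => hz hh.1
  have hup : ∀ z : ℂ, 0 < z.im → HasDerivAt φs (nuUp a b c z) z := fun z hz => by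
    have := hderiv z (hD_of z hz.ne')
    rwa [hν, nu_eq_nuUp hz] at this
  -- the reflected function `z ↦ conj (φs (conj z))`, whose upper boundary values are `conj φm`
  have hlow : ∀ z : ℂ, 0 < z.im →
      HasDerivAt ((starRingEnd ℂ) ∘ φs ∘ (starRingEnd ℂ)) (nuUp a b c z) z := fun z hz => by
    have := (hderiv (starRingEnd ℂ z) (hD_of _ (by simpa using hz.ne'))).conj_conj
    rwa [hν, nu_conj hz, Complex.conj_conj] at this
  have hφm' : ∀ x : ℝ, Tendsto (fun ε : ℝ =>
      ((starRingEnd ℂ) ∘ φs ∘ (starRingEnd ℂ)) (x + ε * Complex.I)) (𝓝[>] 0)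
      (𝓝 (starRingEnd ℂ (φm x))) := fun x => by
    have := (Complex.continuous_conj.tendsto _).comp (hφm x)
    refine this.congr fun e => ?_
    simp [sub_eq_add_neg]
  -- radial approach to a point of the real line stays inside `D`
  have vp (x : ℝ) : Tendsto (fun ε : ℝ => (x:ℂ) + ε * Complex.I) (𝓝[>] 0) (𝓝[D] (x:ℂ)) := by
    refine tendsto_nhdsWithin_iff.2 ⟨tendsto_vert x, ?_⟩
    filter_upwards [self_mem_nhdsWithin] with e he
    exact hD_of _ (by simpa using (ne_of_gt he))
  have vm (x : ℝ) : Tendsto (fun ε : ℝ => (x:ℂ) - ε * Complex.I) (𝓝[>] 0) (𝓝[D] (x:ℂ)) := by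
    refine tendsto_nhdsWithin_iff.2 ⟨?_, ?_⟩
    · have := (Complex.continuous_conj.tendsto _).comp (tendsto_vert x)
      rw [Complex.conj_ofReal] at this
      refine this.congr fun e => ?_
      simp [sub_eq_add_neg]
    · filter_upwards [self_mem_nhdsWithin] with e he
      exact hD_of _ (by simpa using (ne_of_gt he))
  have pb : φp b = 0 := tendsto_nhds_unique (hφp b) (hbase.comp (vp b))
  have mb : φm b = 0 := tendsto_nhds_unique (hφm b) (hbase.comp (vm b))
  have h1' : Tendsto φs (𝓝[D] ((1:ℝ):ℂ)) (𝓝 φ1) := by rwa [Complex.ofReal_one]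
  have p1 : φp 1 = φ1 := tendsto_nhds_unique (hφp 1) (h1'.comp (vp 1))
  have m1 : φm 1 = φ1 := tendsto_nhds_unique (hφm 1) (h1'.comp (vm 1))
  obtain ⟨p_i, p_ii, p_iii, p_iv, p_v, p_vi⟩ := upper_boundary h hup hφp pb
  obtain ⟨m_i, -, m_iii, m_iv, m_v, m_vi⟩ := upper_boundary h hlow hφm' (by rw [mb, map_zero])
  simp only [Complex.conj_re, Complex.conj_im] at m_i m_iv m_v m_vi
  rw [p1] at p_i
  rw [m1] at m_i
  refine ⟨fun x hx => ⟨(p_i x hx).1, (m_i x hx).1, (p_i x hx).2, ?_⟩, fun x hx hx1 => ?_, ?_,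
    hbase, ⟨p_iii, ?_⟩, fun x hx hxb => ⟨(p_iv x hx hxb).1, (m_iv x hx hxb).1, ?_, ?_⟩,
    fun x hx hxa => ⟨(p_v x hx hxa).1, (m_v x hx hxa).1, (p_v x hx hxa).2, ?_⟩,
    fun x hx => ⟨(p_vi x hx).1, (m_vi x hx).1, (p_vi x hx).2, ?_⟩⟩
  · linarith [(m_i x hx).2]
  · have hxD : (x:ℂ) ∈ D := by
      rw [hD]
      rintro ⟨-, hh | hh⟩
      · exact absurd hx (not_lt.2 (by simpa using hh))
      · exact absurd hx1 (not_lt.2 (by simpa using hh))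
    have hcont := (hderiv x hxD).continuousAt.tendsto
    rw [← tendsto_nhds_unique (hφp x) (hcont.comp (tendsto_vert x))]
    exact p_ii x hx hx1.le
  · rw [← p1]; exact p_ii 1 hb1 le_rfl
  · rw [← Complex.conj_conj (φm a), m_iii]
    simp
  · exact Complex.arg_eq_pi_div_two_iff.2 (p_iv x hx hxb)
  · have := m_iv x hx hxb
    exact Complex.arg_eq_neg_pi_div_two_iff.2 ⟨this.1, by linarith⟩
  · linarith [(m_v x hx hxa).2]
  · linarith [(m_vi x hx).2]
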